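/- arXiv:math/0505180 — 11 statements merged into one kernel-verified Lean document; each statement's English description precedes it below -/
import Mathlib

section
/- Let w₁, w₂ ∈ ℝ³ be spacelike vectors for the Minkowski form B, and let x, y ∈ H² satisfy B(wᵢ, x) > 0 and B(wᵢ, y) < 0 for i = 1, 2. Then w₁ + w₂ is spacelike, and moreover B(w₁ + w₂, x) > 0 and B(w₁ + w₂, y) < 0. -/
/-- The Minkowski bilinear form on ℝ³. -/
noncomputable def B (x y : Fin 3 → ℝ) : ℝ := -(x 0 * y 0) + x 1 * y 1 + x 2 * y 2

/-- The hyperboloid model of the hyperbolic plane. -/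
def H2 : Set (Fin 3 → ℝ) := {x | B x x = -1 ∧ 0 < x 0}

theorem aux_cs (a b c p q r : ℝ) (hw : b^2 + c^2 ≤ a^2) (hx : q^2 + r^2 ≤ p^2)
    (ha : 0 ≤ a) (hp : 0 ≤ p) : b * q + c * r ≤ a * p := by
  refine abs_le_of_sq_le_sq' ?_ (mul_nonneg ha hp) |>.2
  have h1 : (b^2 + c^2) * (q^2 + r^2) ≤ a^2 * p^2 :=
    mul_le_mul hw hx (by positivity) (by positivity)
  nlinarith [sq_nonneg (b * r - c * q)]

theorem sum_of_spacelike_separating (w₁ w₂ x y : Fin 3 → ℝ)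
    (hw₁ : 0 < B w₁ w₁) (hw₂ : 0 < B w₂ w₂)
    (hx : x ∈ H2) (hy : y ∈ H2)
    (h1x : 0 < B w₁ x) (h2x : 0 < B w₂ x)
    (h1y : B w₁ y < 0) (h2y : B w₂ y < 0) :
    0 < B (w₁ + w₂) (w₁ + w₂) ∧ 0 < B (w₁ + w₂) x ∧ B (w₁ + w₂) y < 0 := by
  obtain ⟨hx1, hx0⟩ := hx
  obtain ⟨hy1, hy0⟩ := hy
  have hX : 0 < B (w₁ + w₂) x := by
    simp only [B, Pi.add_apply] at *; linarith
  have hY : B (w₁ + w₂) y < 0 := by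
    simp only [B, Pi.add_apply] at *; linarith
  refine ⟨?_, hX, hY⟩
  by_contra hW
  generalize w₁ + w₂ = w at hX hY hW
  simp only [B] at hX hY hW hx1 hy1
  rcases le_total 0 (w 0) with h | h
  · have := aux_cs (w 0) (w 1) (w 2) (x 0) (x 1) (x 2) (by nlinarith) (by nlinarith) h hx0.le
    linarith
  · have := aux_cs (-w 0) (-w 1) (-w 2) (y 0) (y 1) (y 2) (by nlinarith) (by nlinarith)
      (by linarith) hy0.le
    linarith
end

section
/- Let u, v ∈ ℝ³ be unit spacelike vectors and x, y ∈ H² with B(u,x) > 0, B(u,y) < 0, B(v,x) > 0, B(v,y) < 0. Suppose the dual geodesics of u and v are disjoint, i.e., there is no z ∈ H² with B(u,z) = 0 and B(v,z) = 0. Then B(u,v) ≥ 1. -/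
theorem aux_cs_s3 (a0 a1 a2 x0 x1 x2 : ℝ) (ha : 0 ≤ a0) (hx : 0 ≤ x0)
    (h1 : a1^2 + a2^2 ≤ a0^2) (h2 : x1^2 + x2^2 ≤ x0^2) : a1 * x1 + a2 * x2 ≤ a0 * x0 := by
  apply le_of_sq_le_sq _ (mul_nonneg ha hx)
  have h3 := mul_le_mul h1 h2 (by positivity) (by positivity)
  nlinarith [sq_nonneg (a1 * x2 - a2 * x1)]

theorem disjoint_separating_duals_have_product_ge_one (u v x y : Fin 3 → ℝ)
    (hu : B u u = 1) (hv : B v v = 1)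
    (hx : x ∈ H2) (hy : y ∈ H2)
    (hux : 0 < B u x) (huy : B u y < 0)
    (hvx : 0 < B v x) (hvy : B v y < 0)
    (hdisj : ¬ ∃ z ∈ H2, B u z = 0 ∧ B v z = 0) :
    1 ≤ B u v := by
  by_contra hc
  push Not at hc
  obtain ⟨hx1, hx0⟩ := hx
  obtain ⟨hy1, hy0⟩ := hy
  by_cases hm : B u v ≤ -1
  · simp only [B] at *
    have hw : (u 1 + v 1)^2 + (u 2 + v 2)^2 ≤ (u 0 + v 0)^2 := by nlinarith
    rcases le_total 0 (u 0 + v 0) with h | h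
    · have := aux_cs_s3 _ _ _ (x 0) (x 1) (x 2) h hx0.le hw (by nlinarith)
      nlinarith
    · have := aux_cs_s3 (-(u 0 + v 0)) (-(u 1 + v 1)) (-(u 2 + v 2)) (y 0) (y 1) (y 2)
        (by linarith) hy0.le (by nlinarith) (by nlinarith)
      nlinarith
  · push Not at hm
    have hpos : 0 < 1 - (B u v)^2 := by nlinarith
    have key : (u 1 * v 2 - u 2 * v 1)^2 - (u 2 * v 0 - u 0 * v 2)^2 - (u 0 * v 1 - u 1 * v 0)^2
        = 1 - (B u v)^2 := by
      have : (1:ℝ) - (B u v)^2 = B u u * B v v - (B u v)^2 := by rw [hu, hv]; ring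
      rw [this]; simp only [B]; ring
    have hp : u 1 * v 2 - u 2 * v 1 ≠ 0 := by
      intro h; rw [h] at key; nlinarith [sq_nonneg (u 2 * v 0 - u 0 * v 2), sq_nonneg (u 0 * v 1 - u 1 * v 0)]
    have hs : 0 < Real.sqrt (1 - (B u v)^2) := Real.sqrt_pos.mpr hpos
    have hss := Real.sq_sqrt hpos.le
    obtain ⟨t, ht, htp⟩ : ∃ t : ℝ, t^2 * (1 - (B u v)^2) = 1 ∧
        0 < t * -(u 1 * v 2 - u 2 * v 1) := by
      rcases lt_or_gt_of_ne hp with h | h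
      · refine ⟨(Real.sqrt (1 - (B u v)^2))⁻¹, ?_, mul_pos (inv_pos.mpr hs) (by linarith)⟩
        rw [inv_pow, hss, inv_mul_cancel₀ hpos.ne']
      · refine ⟨-(Real.sqrt (1 - (B u v)^2))⁻¹, ?_, ?_⟩
        · rw [neg_sq, inv_pow, hss, inv_mul_cancel₀ hpos.ne']
        · rw [neg_mul_neg]; exact mul_pos (inv_pos.mpr hs) h
    rw [← key] at ht
    refine hdisj ⟨![t * -(u 1 * v 2 - u 2 * v 1), t * (u 2 * v 0 - u 0 * v 2),
      t * (u 0 * v 1 - u 1 * v 0)], ⟨?_, ?_⟩, ?_, ?_⟩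
    · simp only [B, Matrix.cons_val]; linear_combination -ht
    · simpa only [Matrix.cons_val] using htp
    · simp only [B, Matrix.cons_val]; ring
    · simp only [B, Matrix.cons_val]; ring
end

section
/- Let K, N, M, L be natural numbers and let v : Fin K → ℝ³, w : Fin N → ℝ³, u : Fin M → ℝ³ be families of vectors such that: B(vᵢ,vᵢ) = B(wᵢ,wᵢ) = B(uᵢ,uᵢ) = 1 for all indices; B(vᵢ,vⱼ) ≥ 1, B(wᵢ,wⱼ) ≥ 1 and B(uᵢ,uⱼ) ≥ 1 whenever i ≠ j; B(vᵢ,wⱼ) ≥ 1 and B(vᵢ,uⱼ) ≥ 1 for all i, j; B(uᵢ,wⱼ) ≥ -1 for all i, j; and the set of pairs (i,j) with B(uᵢ,wⱼ) < 0 has at most L elements. Then for all nonnegative reals a, c, d, the vector τ = a·Σᵢ vᵢ + c·Σᵢ wᵢ + d·Σᵢ uᵢ satisfies B(τ,τ) ≥ (K·a)² + (N·c)² + (M·d)² - 2·L·c·d. -/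
theorem B_sum_sum {m n : ℕ} (x : Fin m → Fin 3 → ℝ) (y : Fin n → Fin 3 → ℝ) :
    B (∑ i, x i) (∑ j, y j) = ∑ i, ∑ j, B (x i) (y j) := by
  simp only [B, Finset.sum_apply, Finset.sum_add_distrib, Finset.sum_neg_distrib,
    Finset.sum_mul_sum]

theorem B_expand (a c d : ℝ) (x y z : Fin 3 → ℝ) :
    B (a • x + c • y + d • z) (a • x + c • y + d • z) =
      a ^ 2 * B x x + c ^ 2 * B y y + d ^ 2 * B z z + 2 * (a * c) * B x y
        + 2 * (a * d) * B x z + 2 * (c * d) * B z y := by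
  simp only [B, Pi.add_apply, Pi.smul_apply, smul_eq_mul]
  ring

theorem B_ge {m n : ℕ} (x : Fin m → Fin 3 → ℝ) (y : Fin n → Fin 3 → ℝ)
    (h : ∀ i j, 1 ≤ B (x i) (y j)) : (m : ℝ) * n ≤ B (∑ i, x i) (∑ j, y j) := by
  rw [B_sum_sum]
  calc (m : ℝ) * n = ∑ _i : Fin m, ∑ _j : Fin n, (1 : ℝ) := by simp
    _ ≤ _ := Finset.sum_le_sum fun i _ => Finset.sum_le_sum fun j _ => h i j

theorem B_self_ge {m : ℕ} (x : Fin m → Fin 3 → ℝ) (h1 : ∀ i, B (x i) (x i) = 1)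
    (h : ∀ i j, i ≠ j → 1 ≤ B (x i) (x j)) : (m : ℝ) * m ≤ B (∑ i, x i) (∑ j, x j) := by
  apply B_ge
  intro i j
  by_cases e : i = j
  · subst e; exact (h1 i).ge
  · exact h i j e

theorem B_ge_neg {m n L : ℕ} (x : Fin m → Fin 3 → ℝ) (y : Fin n → Fin 3 → ℝ)
    (h : ∀ i j, -1 ≤ B (x i) (y j))
    (hL : {p : Fin m × Fin n | B (x p.1) (y p.2) < 0}.ncard ≤ L) :
    -(L : ℝ) ≤ B (∑ i, x i) (∑ j, y j) := by
  classical
  rw [B_sum_sum, ← Fintype.sum_prod_type' (fun i j => B (x i) (y j))]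
  have e : {p : Fin m × Fin n | B (x p.1) (y p.2) < 0}.ncard =
      (Finset.univ.filter fun p : Fin m × Fin n => B (x p.1) (y p.2) < 0).card := by
    rw [← Set.ncard_coe_finset]
    simp
  rw [e] at hL
  have hL' : ((Finset.univ.filter fun p : Fin m × Fin n => B (x p.1) (y p.2) < 0).card : ℝ) ≤ L := by
    exact_mod_cast hL
  calc -(L : ℝ) ≤ -((Finset.univ.filter fun p : Fin m × Fin n =>
          B (x p.1) (y p.2) < 0).card : ℝ) := by linarith
    _ = ∑ p : Fin m × Fin n, if B (x p.1) (y p.2) < 0 then (-1 : ℝ) else 0 := by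
        rw [← Finset.sum_filter]; simp
    _ ≤ _ := by
        apply Finset.sum_le_sum
        intro p _
        split_ifs with hp
        · exact h _ _
        · exact not_lt.mp hp

theorem cocycle_norm_lower_bound (K N M L : ℕ)
    (v : Fin K → Fin 3 → ℝ) (w : Fin N → Fin 3 → ℝ) (u : Fin M → Fin 3 → ℝ)
    (hv : ∀ i, B (v i) (v i) = 1)
    (hw : ∀ i, B (w i) (w i) = 1)
    (hu : ∀ i, B (u i) (u i) = 1)
    (hvv : ∀ i j, i ≠ j → 1 ≤ B (v i) (v j))
    (hww : ∀ i j, i ≠ j → 1 ≤ B (w i) (w j))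
    (huu : ∀ i j, i ≠ j → 1 ≤ B (u i) (u j))
    (hvw : ∀ i j, 1 ≤ B (v i) (w j))
    (hvu : ∀ i j, 1 ≤ B (v i) (u j))
    (huw : ∀ i j, -1 ≤ B (u i) (w j))
    (hL : {p : Fin M × Fin N | B (u p.1) (w p.2) < 0}.ncard ≤ L)
    (a c d : ℝ) (ha : 0 ≤ a) (hc : 0 ≤ c) (hd : 0 ≤ d) :
    (K * a) ^ 2 + (N * c) ^ 2 + (M * d) ^ 2 - 2 * L * c * d ≤
      B (a • ∑ i, v i + c • ∑ i, w i + d • ∑ i, u i)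
        (a • ∑ i, v i + c • ∑ i, w i + d • ∑ i, u i) := by
  rw [B_expand]
  have h1 := mul_le_mul_of_nonneg_left (B_self_ge v hv hvv) (sq_nonneg a)
  have h2 := mul_le_mul_of_nonneg_left (B_self_ge w hw hww) (sq_nonneg c)
  have h3 := mul_le_mul_of_nonneg_left (B_self_ge u hu huu) (sq_nonneg d)
  have h4 : 0 ≤ B (∑ i, v i) (∑ i, w i) := le_trans (by positivity) (B_ge v w hvw)
  have h5 : 0 ≤ B (∑ i, v i) (∑ i, u i) := le_trans (by positivity) (B_ge v u hvu)
  have h6 := mul_le_mul_of_nonneg_left (B_ge_neg u w huw hL) (mul_nonneg hc hd)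
  have h7 := mul_nonneg (mul_nonneg ha hc) h4
  have h8 := mul_nonneg (mul_nonneg ha hd) h5
  linarith
end

section
/- Let γ = M(l) and δ = R_θ·M(m)·R_{-θ}. Then trace(δγ) = (1 + cos²θ)·cosh l·cosh m + 2·cos θ·sinh l·sinh m + sin²θ·(cosh l + cosh m) + cos²θ. In particular, if l > 0, m > 0 and 0 < θ ≤ π/2, then trace(δγ) > 3 (so δγ is a hyperbolic element of SO(2,1)). -/
/-- Hyperbolic translation of length `l` along the standard axis. -/
noncomputable def Mmat (l : ℝ) : Matrix (Fin 3) (Fin 3) ℝ :=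
  !![Real.cosh l, Real.sinh l, 0; Real.sinh l, Real.cosh l, 0; 0, 0, 1]

/-- Rotation by angle `θ`. -/
noncomputable def Rmat (θ : ℝ) : Matrix (Fin 3) (Fin 3) ℝ :=
  !![1, 0, 0; 0, Real.cos θ, -Real.sin θ; 0, Real.sin θ, Real.cos θ]

theorem trace_of_delta_gamma (l m θ : ℝ) :
    Matrix.trace ((Rmat θ * Mmat m * Rmat (-θ)) * Mmat l) =
      (1 + Real.cos θ ^ 2) * Real.cosh l * Real.cosh m +
        2 * Real.cos θ * Real.sinh l * Real.sinh m +
        Real.sin θ ^ 2 * (Real.cosh l + Real.cosh m) + Real.cos θ ^ 2 ∧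
    (0 < l → 0 < m → 0 < θ → θ ≤ Real.pi / 2 →
      3 < Matrix.trace ((Rmat θ * Mmat m * Rmat (-θ)) * Mmat l)) := by
  have key : Matrix.trace ((Rmat θ * Mmat m * Rmat (-θ)) * Mmat l) =
      (1 + Real.cos θ ^ 2) * Real.cosh l * Real.cosh m +
        2 * Real.cos θ * Real.sinh l * Real.sinh m +
        Real.sin θ ^ 2 * (Real.cosh l + Real.cosh m) + Real.cos θ ^ 2 := by
    simp [Rmat, Mmat, Matrix.trace, Matrix.mul_apply, Fin.sum_univ_three]
    ring
  refine ⟨key, fun hl hm h0 h1 => ?_⟩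
  rw [key]
  have hc : 0 ≤ Real.cos θ := Real.cos_nonneg_of_mem_Icc ⟨by linarith, h1⟩
  have hC : 1 < Real.cosh l := Real.one_lt_cosh.2 hl.ne'
  have hD : 1 < Real.cosh m := Real.one_lt_cosh.2 hm.ne'
  have hS : 0 < Real.sinh l := Real.sinh_pos_iff.2 hl
  have hT : 0 < Real.sinh m := Real.sinh_pos_iff.2 hm
  have e1 : 0 ≤ 2 * Real.cos θ * Real.sinh l * Real.sinh m := by positivity
  have e2 : 1 < Real.cosh l * Real.cosh m := by nlinarith
  have e3 : 0 < (1 + Real.cos θ ^ 2) * (Real.cosh l * Real.cosh m - 1) :=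
    mul_pos (by positivity) (by linarith)
  have e4 : 0 ≤ Real.sin θ ^ 2 * (Real.cosh l + Real.cosh m - 2) :=
    mul_nonneg (by positivity) (by linarith)
  have e5 := Real.sin_sq_add_cos_sq θ
  nlinarith
end

section
/- Let γ = M(l), δ = R_θ·M(m)·R_{-θ}, and let w = (sin θ·(cosh m - 1)·sinh l, -sin θ·(cosh m - 1)·(cosh l + 1), sinh l·sinh m + cos θ·(cosh l + 1)·(cosh m - 1)). Then (δγ)·w = w. Moreover, if l > 0, m > 0 and 0 < θ < π then w ≠ 0, and if additionally θ ≤ π/2 then w is spacelike: B(w,w) > 0. -/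
/-- Generator of the fixed line of `δγ`. -/
noncomputable def wvec (l m θ : ℝ) : Fin 3 → ℝ :=
  ![Real.sin θ * (Real.cosh m - 1) * Real.sinh l,
    -(Real.sin θ * (Real.cosh m - 1) * (Real.cosh l + 1)),
    Real.sinh l * Real.sinh m + Real.cos θ * (Real.cosh l + 1) * (Real.cosh m - 1)]

/-- Generator of the fixed line of the commutator `α = δ⁻¹γ⁻¹δγ`. -/
noncomputable def vvec (l m θ : ℝ) : Fin 3 → ℝ :=
  ![Real.sinh l * Real.sinh m + (Real.cosh l - 1) * (Real.cosh m - 1) * Real.cos θ,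
    -(Real.sinh m * (Real.cosh l - 1)) - Real.sinh l * (Real.cosh m - 1) * Real.cos θ,
    -(Real.sin θ * Real.sinh l * (Real.cosh m - 1))]

theorem wvec_fixed_and_spacelike (l m θ : ℝ) :
    ((Rmat θ * Mmat m * Rmat (-θ)) * Mmat l).mulVec (wvec l m θ) = wvec l m θ ∧
    (0 < l → 0 < m → 0 < θ → θ < Real.pi → wvec l m θ ≠ 0) ∧
    (0 < l → 0 < m → 0 < θ → θ ≤ Real.pi / 2 → 0 < B (wvec l m θ) (wvec l m θ)) := by
  have hl := Real.cosh_sq l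
  have hm := Real.cosh_sq m
  have ht := Real.sin_sq_add_cos_sq θ
  refine ⟨?_, ?_, ?_⟩
  · have h1 : (Mmat l).mulVec (wvec l m θ) =
        ![-(Real.sin θ * (Real.cosh m - 1) * Real.sinh l),
          -(Real.sin θ * (Real.cosh m - 1) * (Real.cosh l + 1)),
          Real.sinh l * Real.sinh m + Real.cos θ * (Real.cosh l + 1) * (Real.cosh m - 1)] := by
      ext i
      fin_cases i <;> simp [Mmat, wvec, Matrix.mulVec, dotProduct, Fin.sum_univ_three]
      · ring
      · linear_combination (-(Real.sin θ * (Real.cosh m - 1))) * hl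
    have h2 : (Rmat (-θ)).mulVec
        ![-(Real.sin θ * (Real.cosh m - 1) * Real.sinh l),
          -(Real.sin θ * (Real.cosh m - 1) * (Real.cosh l + 1)),
          Real.sinh l * Real.sinh m + Real.cos θ * (Real.cosh l + 1) * (Real.cosh m - 1)] =
        ![-(Real.sin θ * (Real.cosh m - 1) * Real.sinh l),
          Real.sin θ * Real.sinh l * Real.sinh m,
          (Real.cosh m - 1) * (Real.cosh l + 1) + Real.cos θ * Real.sinh l * Real.sinh m] := by
      ext i
      fin_cases i <;> simp [Rmat, Matrix.mulVec, dotProduct, Fin.sum_univ_three]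
      · ring
      · linear_combination ((Real.cosh m - 1) * (Real.cosh l + 1)) * ht
    have h3 : (Mmat m).mulVec
        ![-(Real.sin θ * (Real.cosh m - 1) * Real.sinh l),
          Real.sin θ * Real.sinh l * Real.sinh m,
          (Real.cosh m - 1) * (Real.cosh l + 1) + Real.cos θ * Real.sinh l * Real.sinh m] =
        ![Real.sin θ * (Real.cosh m - 1) * Real.sinh l,
          Real.sin θ * Real.sinh l * Real.sinh m,
          (Real.cosh m - 1) * (Real.cosh l + 1) + Real.cos θ * Real.sinh l * Real.sinh m] := by
      ext i
      fin_cases i <;> simp [Mmat, Matrix.mulVec, dotProduct, Fin.sum_univ_three]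
      · linear_combination (-(Real.sin θ * Real.sinh l)) * hm
      · ring
    have h4 : (Rmat θ).mulVec
        ![Real.sin θ * (Real.cosh m - 1) * Real.sinh l,
          Real.sin θ * Real.sinh l * Real.sinh m,
          (Real.cosh m - 1) * (Real.cosh l + 1) + Real.cos θ * Real.sinh l * Real.sinh m] =
        wvec l m θ := by
      ext i
      fin_cases i <;> simp [Rmat, wvec, Matrix.mulVec, dotProduct, Fin.sum_univ_three]
      · ring
      · linear_combination (Real.sinh l * Real.sinh m) * ht
    rw [← Matrix.mulVec_mulVec, ← Matrix.mulVec_mulVec, ← Matrix.mulVec_mulVec, h1, h2, h3, h4]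
  · intro h0 h1 h2 h3 h
    have hs := Real.sin_pos_of_pos_of_lt_pi h2 h3
    have hc : 0 < Real.cosh m - 1 := sub_pos.2 (Real.one_lt_cosh.2 h1.ne')
    have hS := Real.sinh_pos_iff.2 h0
    have h5 : Real.sin θ * (Real.cosh m - 1) * Real.sinh l = 0 := by
      simpa only [wvec, Matrix.cons_val_zero, Pi.zero_apply] using congrFun h 0
    have := mul_pos (mul_pos hs hc) hS
    linarith
  · intro h0 h1 h2 h3
    have hs := Real.sin_pos_of_pos_of_lt_pi h2 (by linarith [Real.pi_pos])
    have hc : 0 < Real.cosh m - 1 := sub_pos.2 (Real.one_lt_cosh.2 h1.ne')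
    have hC := Real.cosh_pos l
    have e : B (wvec l m θ) (wvec l m θ) =
        (Real.sin θ * (Real.cosh m - 1)) ^ 2 * (2 * Real.cosh l + 2) +
        (Real.sinh l * Real.sinh m + Real.cos θ * (Real.cosh l + 1) * (Real.cosh m - 1)) ^ 2 := by
      simp [B, wvec]
      linear_combination ((Real.sin θ * (Real.cosh m - 1)) ^ 2) * hl
    rw [e]
    positivity
end

section
/- Let l > 0, m > 0, 0 < θ ≤ π/2, γ = M(l), δ = R_θ·M(m)·R_{-θ}, and w = (sin θ·(cosh m - 1)·sinh l, -sin θ·(cosh m - 1)·(cosh l + 1), sinh l·sinh m + cos θ·(cosh l + 1)·(cosh m - 1)). Then the fixed space of δγ is exactly the line spanned by w: {x ∈ ℝ³ : (δγ)·x = x} = ℝ·w. -/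
theorem fixed_space_of_delta_gamma (l m θ : ℝ)
    (hl : 0 < l) (hm : 0 < m) (hθ : 0 < θ) (hθ' : θ ≤ Real.pi / 2) :
    {x : Fin 3 → ℝ | ((Rmat θ * Mmat m * Rmat (-θ)) * Mmat l).mulVec x = x} =
      {x : Fin 3 → ℝ | ∃ t : ℝ, x = t • wvec l m θ} := by
  have hS : 0 < Real.sinh l := Real.sinh_pos_iff.mpr hl
  have hC : 1 < Real.cosh l := Real.one_lt_cosh.mpr hl.ne'
  have hc : 1 < Real.cosh m := Real.one_lt_cosh.mpr hm.ne'
  have hb : 0 < Real.sin θ :=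
    Real.sin_pos_of_pos_of_lt_pi hθ (by linarith [Real.pi_pos])
  have h1 := Real.cosh_sq l
  have h2 := Real.cosh_sq m
  have h3 := Real.sin_sq_add_cos_sq θ
  ext x
  simp only [Set.mem_ofPred_eq, ← Matrix.mulVec_mulVec, funext_iff, Fin.forall_fin_succ]
  simp [Rmat, Mmat, wvec, Matrix.mulVec, dotProduct, Fin.sum_univ_three]
  generalize Real.sinh l = S at *
  generalize Real.cosh l = C at *
  generalize Real.sinh m = s at *
  generalize Real.cosh m = c at *
  generalize Real.sin θ = b at *
  generalize Real.cos θ = a at *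
  generalize x 0 = X at *
  generalize x 1 = Y at *
  generalize x 2 = Z at *
  constructor
  · rintro ⟨e0, e1, e2⟩
    have k1 : S * X + C * Y = Y := by
      apply mul_left_cancel₀ hb.ne'
      linear_combination b * e1 - a * e2 - (b * (S * X + C * Y) - a * Z) * h3
    have k2 : s * (C * X + S * Y) + c * (a * (S * X + C * Y) + b * Z) = a * Y + b * Z := by
      linear_combination a * e1 + b * e2
        - (s * (C * X + S * Y) + c * (a * (S * X + C * Y) + b * Z)) * h3
    have k3 : C * X + S * Y = -X := by
      apply mul_left_cancel₀ hS.ne'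
      linear_combination (C + 1) * k1 - Y * h1
    rw [k1, k3] at k2
    have hc' : c - 1 ≠ 0 := by linarith
    have hC' : C + 1 ≠ 0 := by linarith
    have hb' := hb.ne'
    refine ⟨-Y / (b * (c - 1) * (C + 1)), ?_, ?_, ?_⟩
    · field_simp
      linear_combination k3
    · field_simp
    · field_simp
      linear_combination (C + 1) * k2 + s * k3
  · rintro ⟨t, rfl, rfl, rfl⟩
    have g0 : C * (t * (b * (c - 1) * S)) + S * -(t * (b * (c - 1) * (C + 1)))
        = -(t * (b * (c - 1) * S)) := by ring
    have g1 : S * (t * (b * (c - 1) * S)) + C * -(t * (b * (c - 1) * (C + 1)))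
        = -(t * (b * (c - 1) * (C + 1))) := by
      linear_combination -(t * b * (c - 1)) * h1
    have g2 : a * -(t * (b * (c - 1) * (C + 1)))
        + b * (t * (S * s + a * (C + 1) * (c - 1))) = t * b * S * s := by ring
    rw [g0, g1, g2]
    refine ⟨?_, ?_, ?_⟩
    · linear_combination -(t * b * S) * h2
    · linear_combination -(t * b * (c - 1) * (C + 1)) * h3
    · linear_combination t * (S * s + a * (C + 1) * (c - 1)) * h3
end

section
/- Let l > 0, m > 0, 0 < θ < π, γ = M(l), δ = R_θ·M(m)·R_{-θ}, α = δ⁻¹γ⁻¹δγ, and v = (sinh l·sinh m + (cosh l - 1)(cosh m - 1)·cos θ, -sinh m·(cosh l - 1) - sinh l·(cosh m - 1)·cos θ, -sin θ·sinh l·(cosh m - 1)). Then {x ∈ ℝ³ : α·x = x} = {x ∈ ℝ³ : (δγ)·x = (γδ)·x} = ℝ·v; in particular the fixed space of α is one-dimensional and spanned by v. -/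
theorem fixed_space_of_commutator (l m θ : ℝ)
    (hl : 0 < l) (hm : 0 < m) (hθ : 0 < θ) (hθ' : θ < Real.pi) :
    {x : Fin 3 → ℝ | ((Rmat θ * Mmat m * Rmat (-θ))⁻¹ * (Mmat l)⁻¹ *
        (Rmat θ * Mmat m * Rmat (-θ)) * Mmat l).mulVec x = x} =
      {x : Fin 3 → ℝ | ((Rmat θ * Mmat m * Rmat (-θ)) * Mmat l).mulVec x =
        (Mmat l * (Rmat θ * Mmat m * Rmat (-θ))).mulVec x} ∧
    {x : Fin 3 → ℝ | ((Rmat θ * Mmat m * Rmat (-θ)) * Mmat l).mulVec x =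
        (Mmat l * (Rmat θ * Mmat m * Rmat (-θ))).mulVec x} =
      {x : Fin 3 → ℝ | ∃ t : ℝ, x = t • vvec l m θ} := by
  have hMdet : ∀ t, IsUnit (Mmat t).det := by
    intro t
    have h := Real.cosh_sq t
    have : (Mmat t).det = 1 := by
      simp [Mmat, Matrix.det_fin_three]
      nlinarith
    rw [this]; exact isUnit_one
  have hRdet : ∀ t, IsUnit (Rmat t).det := by
    intro t
    have h := Real.sin_sq_add_cos_sq t
    have : (Rmat t).det = 1 := by
      simp [Rmat, Matrix.det_fin_three]
      nlinarith
    rw [this]; exact isUnit_one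
  have hD : IsUnit (Rmat θ * Mmat m * Rmat (-θ)).det := by
    rw [Matrix.det_mul, Matrix.det_mul]
    exact ((hRdet _).mul (hMdet _)).mul (hRdet _)
  have hG := hMdet l
  constructor
  · generalize Rmat θ * Mmat m * Rmat (-θ) = D at *
    generalize Mmat l = G at *
    ext x
    simp only [Set.mem_setOf_eq]
    have e : G * D * (D⁻¹ * G⁻¹ * D * G) = D * G := by
      simp only [Matrix.mul_assoc]
      rw [Matrix.mul_nonsing_inv_cancel_left _ _ hD, Matrix.mul_nonsing_inv_cancel_left _ _ hG]
    have e' : D⁻¹ * G⁻¹ * (G * D) = 1 := by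
      simp only [Matrix.mul_assoc]
      rw [Matrix.nonsing_inv_mul_cancel_left _ _ hG, Matrix.nonsing_inv_mul _ hD]
    constructor
    · intro h
      rw [← e, ← Matrix.mulVec_mulVec, h]
    · intro h
      rw [Matrix.mul_assoc (D⁻¹ * G⁻¹), ← Matrix.mulVec_mulVec, h, Matrix.mulVec_mulVec, e',
        Matrix.one_mulVec]
  · have hS : 0 < Real.sinh l := Real.sinh_pos_iff.2 hl
    have hc : 0 < Real.cosh m - 1 := sub_pos.2 (Real.one_lt_cosh.2 hm.ne')
    have hn : 0 < Real.sin θ := Real.sin_pos_of_pos_of_lt_pi hθ hθ'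
    have hk := Real.sin_sq_add_cos_sq θ
    ext x
    simp only [Set.mem_setOf_eq, funext_iff, Fin.forall_fin_succ, vvec, Rmat, Mmat,
      Matrix.mulVec, dotProduct, Matrix.mul_apply, Fin.sum_univ_three]
    simp
    generalize Real.sinh l = S at *
    generalize Real.cosh l = C at *
    generalize Real.sinh m = s at *
    generalize Real.cosh m = c at *
    generalize Real.sin θ = n at *
    generalize Real.cos θ = k at *
    generalize x 0 = x0
    generalize x 1 = x1
    generalize x 2 = x2
    have ha : n * S * (c - 1) ≠ 0 := by positivity
    constructor
    · rintro ⟨h0, h1, h2⟩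
      refine ⟨-x2 / (n * S * (c - 1)), ?_, ?_, ?_⟩
      · field_simp
        apply mul_left_cancel₀ hn.ne'
        linear_combination (-1) * h1 + x0*S*c * hk
      · field_simp
        apply mul_left_cancel₀ hn.ne'
        linear_combination h0 + x1*S*c * hk
      · field_simp
    · rintro ⟨t, rfl, rfl, rfl⟩
      refine ⟨?_, ?_, ?_⟩
      · linear_combination (c*S*t*(C*s - s - k*S + c*k*S)) * hk
      · linear_combination (c*S*t*(-k*C+k*C*c+k-k*c+s*S)) * hk
      · linear_combination (0:ℝ) * hk
end

section
/- Let l > 0, m > 0, 0 < θ < π, γ = M(l), δ = R_θ·M(m)·R_{-θ}, and let w and v be the explicit vectors w = (sin θ·(cosh m - 1)·sinh l, -sin θ·(cosh m - 1)·(cosh l + 1), sinh l·sinh m + cos θ·(cosh l + 1)·(cosh m - 1)) and v = (sinh l·sinh m + (cosh l - 1)(cosh m - 1)·cos θ, -sinh m·(cosh l - 1) - sinh l·(cosh m - 1)·cos θ, -sin θ·sinh l·(cosh m - 1)). Then v - δ·v = 2(cosh m - 1)·((cosh l - 1)·cos θ, -sinh l·cos θ, -sinh l·sin θ), and the linear span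 of the three vectors w, (0,0,1), and v - δ·v has dimension exactly 2. -/
theorem span_w_egamma_v_minus_deltav (l m θ : ℝ)
    (hl : 0 < l) (hm : 0 < m) (hθ : 0 < θ) (hθ' : θ < Real.pi) :
    vvec l m θ - (Rmat θ * Mmat m * Rmat (-θ)).mulVec (vvec l m θ) =
      (2 * (Real.cosh m - 1)) •
        ![(Real.cosh l - 1) * Real.cos θ, -(Real.sinh l * Real.cos θ),
          -(Real.sinh l * Real.sin θ)] ∧
    Module.finrank ℝ (Submodule.span ℝ
      ({wvec l m θ, ![0, 0, 1],
        vvec l m θ - (Rmat θ * Mmat m * Rmat (-θ)).mulVec (vvec l m θ)} :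
          Set (Fin 3 → ℝ))) = 2 := by
  have key : vvec l m θ - (Rmat θ * Mmat m * Rmat (-θ)).mulVec (vvec l m θ) =
      (2 * (Real.cosh m - 1)) •
        ![(Real.cosh l - 1) * Real.cos θ, -(Real.sinh l * Real.cos θ),
          -(Real.sinh l * Real.sin θ)] := by
    have h1 := Real.sin_sq_add_cos_sq θ
    have h2 := Real.cosh_sq m
    rw [← Matrix.mulVec_mulVec, ← Matrix.mulVec_mulVec]
    have hu : (Rmat (-θ)).mulVec (vvec l m θ) =
      ![Real.sinh l * Real.sinh m + (Real.cosh l - 1) * (Real.cosh m - 1) * Real.cos θ,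
        -(Real.sinh m * (Real.cosh l - 1) * Real.cos θ) - Real.sinh l * (Real.cosh m - 1),
        Real.sinh m * (Real.cosh l - 1) * Real.sin θ] := by
      ext i
      fin_cases i
      · simp [Rmat, vvec, Matrix.mulVec, dotProduct, Fin.sum_univ_three]
      · simp [Rmat, vvec, Matrix.mulVec, dotProduct, Fin.sum_univ_three]
        linear_combination (-(Real.sinh l * (Real.cosh m - 1))) * h1
      · simp [Rmat, vvec, Matrix.mulVec, dotProduct, Fin.sum_univ_three]
        ring
    have hd : (Mmat m).mulVec ((Rmat (-θ)).mulVec (vvec l m θ)) =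
      (Rmat (-θ)).mulVec (vvec l m θ) - (2 * (Real.cosh m - 1)) •
        ![(Real.cosh l - 1) * Real.cos θ, -Real.sinh l, 0] := by
      rw [hu]
      ext i
      fin_cases i
      · simp [Mmat, Matrix.mulVec, dotProduct, Fin.sum_univ_three]
        linear_combination ((Real.cosh l - 1) * Real.cos θ) * h2
      · simp [Mmat, Matrix.mulVec, dotProduct, Fin.sum_univ_three]
        linear_combination (-Real.sinh l) * h2
      · simp [Mmat, Matrix.mulVec, dotProduct, Fin.sum_univ_three]
    have hR : (Rmat θ).mulVec ((Rmat (-θ)).mulVec (vvec l m θ)) = vvec l m θ := by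
      have : Rmat θ * Rmat (-θ) = 1 := by
        ext i j
        fin_cases i <;> fin_cases j <;>
          simp [Rmat, Matrix.mul_apply, Fin.sum_univ_three] <;> linarith
      rw [Matrix.mulVec_mulVec, this, Matrix.one_mulVec]
    rw [hd, Matrix.mulVec_sub, hR, sub_sub_cancel, Matrix.mulVec_smul]
    congr 1
    ext i
    fin_cases i <;>
      simp [Rmat, Matrix.mulVec, dotProduct, Fin.sum_univ_three] <;> ring
  refine ⟨key, ?_⟩
  rw [key]
  have hs : 0 < Real.sin θ := Real.sin_pos_of_pos_of_lt_pi hθ hθ'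
  have hsl : 0 < Real.sinh l := Real.sinh_pos_iff.2 hl
  have hcm : 0 < Real.cosh m - 1 := sub_pos.2 (Real.one_lt_cosh.2 hm.ne')
  have hcl : 0 < Real.cosh l + 1 := by linarith [Real.cosh_pos l]
  have hq := Real.cosh_sq l
  set d : Fin 3 → ℝ := (2 * (Real.cosh m - 1)) •
        ![(Real.cosh l - 1) * Real.cos θ, -(Real.sinh l * Real.cos θ),
          -(Real.sinh l * Real.sin θ)] with hdd
  obtain ⟨a, ha⟩ : ∃ a, a * (Real.sin θ * (Real.cosh l + 1)) =
      2 * Real.cos θ * Real.sinh l :=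
    ⟨2 * Real.cos θ * Real.sinh l / (Real.sin θ * (Real.cosh l + 1)), by field_simp⟩
  have ha2 : a * (Real.sin θ * Real.sinh l) = 2 * Real.cos θ * (Real.cosh l - 1) := by
    apply mul_right_cancel₀ hcl.ne'
    linear_combination Real.sinh l * ha - 2 * Real.cos θ * hq
  have hmem : d ∈ Submodule.span ℝ ({wvec l m θ, ![0, 0, 1]} : Set (Fin 3 → ℝ)) := by
    rw [Submodule.mem_span_pair]
    refine ⟨a, d 2 - a * wvec l m θ 2, ?_⟩
    ext i
    fin_cases i
    · simp [hdd, wvec]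
      linear_combination (Real.cosh m - 1) * ha2
    · simp [hdd, wvec]
      linear_combination (Real.cosh m - 1) * ha
    · simp
  have hset : ({wvec l m θ, ![0, 0, 1], d} : Set (Fin 3 → ℝ)) =
      insert d {wvec l m θ, ![0, 0, 1]} := by
    ext x; simp only [Set.mem_insert_iff, Set.mem_singleton_iff]; tauto
  rw [hset, Submodule.span_insert_eq_span hmem]
  have hli : LinearIndependent ℝ ![wvec l m θ, ![0, 0, 1]] := by
    rw [LinearIndependent.pair_iff]
    intro x y h
    have h0 := congrFun h 0
    have h2 := congrFun h 2
    simp [wvec, hs.ne', hsl.ne', hcm.ne'] at h0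
    subst h0
    simp at h2
    exact ⟨rfl, h2⟩
  have := finrank_span_eq_card hli
  rw [Matrix.range_cons_cons_empty] at this
  simpa using this
end

section
/- Let l > 0, m > 0, 0 < θ ≤ π/2, γ = M(l), δ = R_θ·M(m)·R_{-θ}, and v = (sinh l·sinh m + (cosh l - 1)(cosh m - 1)·cos θ, -sinh m·(cosh l - 1) - sinh l·(cosh m - 1)·cos θ, -sin θ·sinh l·(cosh m - 1)). Then B((δγ)·v, v) < 0. -/
theorem step1 (l m θ : ℝ) : (Mmat l).mulVec (vvec l m θ) =
    ![Real.sinh l * Real.sinh m - (Real.cosh l - 1) * (Real.cosh m - 1) * Real.cos θ,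
    (Real.sinh m * (Real.cosh l - 1)) - Real.sinh l * (Real.cosh m - 1) * Real.cos θ,
    -(Real.sin θ * Real.sinh l * (Real.cosh m - 1))] := by
  have h := Real.cosh_sq l
  ext i
  fin_cases i <;> simp [Mmat, vvec, Matrix.mulVec, dotProduct, Fin.sum_univ_three] <;> grind

theorem step2 (l m θ : ℝ) : (Rmat (-θ)).mulVec 
    ![Real.sinh l * Real.sinh m - (Real.cosh l - 1) * (Real.cosh m - 1) * Real.cos θ,
    (Real.sinh m * (Real.cosh l - 1)) - Real.sinh l * (Real.cosh m - 1) * Real.cos θ,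
    -(Real.sin θ * Real.sinh l * (Real.cosh m - 1))] =
    ![Real.sinh l * Real.sinh m - (Real.cosh l - 1) * (Real.cosh m - 1) * Real.cos θ,
    (Real.sinh m * (Real.cosh l - 1)) * Real.cos θ - Real.sinh l * (Real.cosh m - 1),
    -(Real.sin θ * Real.sinh m * (Real.cosh l - 1))] := by
  have h := Real.sin_sq_add_cos_sq θ
  ext i
  fin_cases i <;> simp [Rmat, Matrix.mulVec, dotProduct, Fin.sum_univ_three] <;> grind

theorem step3 (l m θ : ℝ) : (Mmat m).mulVec 
    ![Real.sinh l * Real.sinh m - (Real.cosh l - 1) * (Real.cosh m - 1) * Real.cos θ,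
    (Real.sinh m * (Real.cosh l - 1)) * Real.cos θ - Real.sinh l * (Real.cosh m - 1),
    -(Real.sin θ * Real.sinh m * (Real.cosh l - 1))] =
    ![Real.sinh l * Real.sinh m + (Real.cosh l - 1) * (Real.cosh m - 1) * Real.cos θ,
    (Real.sinh m * (Real.cosh l - 1)) * Real.cos θ + Real.sinh l * (Real.cosh m - 1),
    -(Real.sin θ * Real.sinh m * (Real.cosh l - 1))] := by
  have h := Real.cosh_sq m
  ext i
  fin_cases i <;> simp [Mmat, Matrix.mulVec, dotProduct, Fin.sum_univ_three] <;> grind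

theorem step4 (l m θ : ℝ) : (Rmat θ).mulVec 
    ![Real.sinh l * Real.sinh m + (Real.cosh l - 1) * (Real.cosh m - 1) * Real.cos θ,
    (Real.sinh m * (Real.cosh l - 1)) * Real.cos θ + Real.sinh l * (Real.cosh m - 1),
    -(Real.sin θ * Real.sinh m * (Real.cosh l - 1))] =
    ![vvec l m θ 0, - vvec l m θ 1, - vvec l m θ 2] := by
  have h := Real.sin_sq_add_cos_sq θ
  ext i
  fin_cases i <;> simp [Rmat, vvec, Matrix.mulVec, dotProduct, Fin.sum_univ_three] <;> grind

theorem deltagamma_v_product_neg (l m θ : ℝ)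
    (hl : 0 < l) (hm : 0 < m) (hθ : 0 < θ) (hθ' : θ ≤ Real.pi / 2) :
    B (((Rmat θ * Mmat m * Rmat (-θ)) * Mmat l).mulVec (vvec l m θ)) (vvec l m θ) < 0 := by
  rw [← Matrix.mulVec_mulVec, step1, ← Matrix.mulVec_mulVec, step2, ← Matrix.mulVec_mulVec,
    step3, step4]
  have h1 : 0 < Real.sinh l := Real.sinh_pos_iff.2 hl
  have h2 : 0 < Real.sinh m := Real.sinh_pos_iff.2 hm
  have h3 : 0 ≤ Real.cosh l - 1 := by linarith [Real.one_le_cosh l]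
  have h4 : 0 ≤ Real.cosh m - 1 := by linarith [Real.one_le_cosh m]
  have h5 : 0 ≤ Real.cos θ := Real.cos_nonneg_of_mem_Icc ⟨by linarith, hθ'⟩
  have h6 : 0 < vvec l m θ 0 := by
    simp only [vvec, Matrix.cons_val_zero]
    positivity
  simp only [B, Matrix.cons_val]
  nlinarith [sq_nonneg (vvec l m θ 1), sq_nonneg (vvec l m θ 2), mul_pos h6 h6]
end

section
/- Let l > 0, m > 0, 0 < θ ≤ π/2, and let w = (sin θ·(cosh m - 1)·sinh l, -sin θ·(cosh m - 1)·(cosh l + 1), sinh l·sinh m + cos θ·(cosh l + 1)·(cosh m - 1)). Then 0 < B(w, (0,0,1))² < B(w, w). (Geometrically: the axis of δγ meets the axis of γ at an angle lying strictly between 0 and π/2, so the ratio r(γ,δ) = cos θ(γδ,δ)/cos θ(γδ,γ) is well defined.) -/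
theorem angle_between_axes_well_defined (l m θ : ℝ)
    (hl : 0 < l) (hm : 0 < m) (hθ : 0 < θ) (hθ' : θ ≤ Real.pi / 2) :
    0 < B (wvec l m θ) ![0, 0, 1] ^ 2 ∧
    B (wvec l m θ) ![0, 0, 1] ^ 2 < B (wvec l m θ) (wvec l m θ) := by
  have hs : 0 < Real.sin θ := Real.sin_pos_of_pos_of_lt_pi hθ (by linarith [Real.pi_pos])
  have hc : 0 ≤ Real.cos θ := Real.cos_nonneg_of_neg_pi_div_two_le_of_le (by linarith) hθ'
  have hsl : 0 < Real.sinh l := Real.sinh_pos_iff.2 hl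
  have hsm : 0 < Real.sinh m := Real.sinh_pos_iff.2 hm
  have hcl : 0 < Real.cosh l := Real.cosh_pos l
  have hcm : 0 < Real.cosh m - 1 := sub_pos.2 (Real.one_lt_cosh.2 hm.ne')
  have e1 : B (wvec l m θ) ![0, 0, 1] = Real.sinh l * Real.sinh m
      + Real.cos θ * (Real.cosh l + 1) * (Real.cosh m - 1) := by
    simp [B, wvec]
  have e2 : B (wvec l m θ) (wvec l m θ) = B (wvec l m θ) ![0, 0, 1] ^ 2
      + (Real.sin θ * (Real.cosh m - 1)) ^ 2 * (2 * (Real.cosh l + 1)) := by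
    rw [e1]
    simp only [B, wvec, Matrix.cons_val]
    linear_combination (Real.sin θ * (Real.cosh m - 1)) ^ 2 * Real.cosh_sq l
  constructor
  · rw [e1]
    positivity
  · rw [e2]
    have : 0 < (Real.sin θ * (Real.cosh m - 1)) ^ 2 * (2 * (Real.cosh l + 1)) := by positivity
    linarith
end

section
/- Let V be a real vector space with a symmetric bilinear form B, let γ, δ : V → V be linear maps preserving B, and let p, q, e_γ, e_δ ∈ V and a, b, c, d ∈ ℝ with γ(e_γ) = e_γ, δ(e_δ) = e_δ, and B(e_γ, e_δ) ≠ 0. If both equations a·(p - δp) + b·q = c·e_γ and a·(p - γp) - b·γ(q) = -d·e_δ hold, then c·B(γ(q), e_γ) = d·B(q, e_δ). (In the geometric setting this is the compatibility condition c/d = cos θ(δ, δγ)/cos θ(γ, δγ) = r(γ,δ) for the solvability of the system.) -/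
theorem cocycle_system_compatibility (V : Type*) [AddCommGroup V] [Module ℝ V]
    (B : V →ₗ[ℝ] V →ₗ[ℝ] ℝ) (hsymm : ∀ x y, B x y = B y x)
    (γ δ : V →ₗ[ℝ] V)
    (hγ : ∀ x y, B (γ x) (γ y) = B x y) (hδ : ∀ x y, B (δ x) (δ y) = B x y)
    (p q eγ eδ : V) (a b c d : ℝ)
    (heγ : γ eγ = eγ) (heδ : δ eδ = eδ)
    (hne : B eγ eδ ≠ 0)
    (h1 : a • (p - δ p) + b • q = c • eγ)
    (h2 : a • (p - γ p) - b • γ q = -(d • eδ)) :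
    c * B (γ q) eγ = d * B q eδ := by
  have e1 := congrArg (fun v => B v eδ) h1
  have e2 := congrArg (fun v => B v eγ) h2
  have k1 := hδ p eδ
  have k2 := hγ p eγ
  rw [heδ] at k1
  rw [heγ] at k2
  simp only [map_add, map_sub, map_smul, map_neg, LinearMap.add_apply, LinearMap.sub_apply,
    LinearMap.smul_apply, LinearMap.neg_apply, smul_eq_mul, k1, k2, hsymm eδ eγ] at e1 e2
  apply mul_left_cancel₀ hne
  linear_combination (-(B (γ q) eγ)) * e1 - (B q eδ) * e2
end
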